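/- arXiv:1709.02947 — 3 statements merged into one kernel-verified Lean document; each statement's English description precedes it below -/
import Mathlib

section
/- Let $\mathfrak{h}$ be a Lie algebra over a field $k$, let $V$ and $W$ be finite-dimensional representations of $\mathfrak{h}$, and let $\tilde{k}/k$ be a field extension. If $V \otimes_k \tilde{k}$ and $W \otimes_k \tilde{k}$ are isomorphic as representations of $\mathfrak{h} \otimes_k \tilde{k}$, then $V$ and $W$ are isomorphic as representations of $\mathfrak{h}$. -/
open TensorProduct

namespace LieModuleHom

section Finite

variable {k h X Y : Type*} [Field k] [LieRing h] [LieAlgebra k h]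
  [AddCommGroup X] [Module k X] [LieRingModule h X]
  [AddCommGroup Y] [Module k Y] [LieRingModule h Y] [LieModule k h Y]

/-- The `k`-linear inclusion of intertwiners into linear maps. -/
def toLinearMapHom : (X →ₗ⁅k, h⁆ Y) →ₗ[k] (X →ₗ[k] Y) where
  toFun f := f.toLinearMap
  map_add' _ _ := rfl
  map_smul' _ _ := rfl

theorem toLinearMap_sum_smul {ι : Type*} (s : Finset ι) (c : ι → k) (g : ι → X →ₗ⁅k, h⁆ Y) :
    (∑ j ∈ s, c j • g j : X →ₗ⁅k, h⁆ Y).toLinearMap = ∑ j ∈ s, c j • (g j).toLinearMap := by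
  change toLinearMapHom (∑ j ∈ s, c j • g j) = _
  simp only [map_sum, map_smul]
  rfl

/-- The space of intertwiners between finite-dimensional representations is finite-dimensional. -/
theorem finiteDimensional [FiniteDimensional k X] [FiniteDimensional k Y] :
    FiniteDimensional k (X →ₗ⁅k, h⁆ Y) :=
  Module.Finite.of_injective (toLinearMapHom (k := k) (h := h) (X := X) (Y := Y))
    fun _ _ hfg ↦ LieModuleHom.ext fun x ↦ LinearMap.congr_fun hfg x

/-- An intertwiner `X → Y` with image in `Z` is the same as an intertwiner `X → Z`. -/
def equivRangeLe (Z : LieSubmodule k h Y) :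
    (X →ₗ⁅k, h⁆ Z) ≃ {f : X →ₗ⁅k, h⁆ Y // f.range ≤ Z} where
  toFun f := ⟨Z.incl.comp f, by
    intro y hy
    obtain ⟨x, rfl⟩ := (LieModuleHom.mem_range _ _).1 hy
    exact (f x).2⟩
  invFun f := LieModuleHom.codRestrict Z f.1 fun x ↦
    f.2 ((LieModuleHom.mem_range _ _).2 ⟨x, rfl⟩)
  left_inv f := by ext; rfl
  right_inv f := by ext; rfl

open Classical in
/-- The number of points where `r ≤ z`, split into those where `r = z` and those where `r < z`. -/
theorem card_filter_le_eq {A P : Type*} [Fintype A] [Fintype P] [PartialOrder P]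
    (r : A → P) (z : P) :
    (Finset.univ.filter fun f ↦ r f ≤ z).card = (Finset.univ.filter fun f ↦ r f = z).card +
      ∑ t ∈ Finset.univ.filter (· < z), (Finset.univ.filter fun f ↦ r f = t).card := by
  rw [Finset.card_eq_sum_card_fiberwise (f := r) (t := Finset.univ.filter (· ≤ z))
    (fun f hf ↦ by simpa using hf)]
  have hins : Finset.univ.filter (· ≤ z) = insert z (Finset.univ.filter (· < z)) := by
    ext t
    simp [le_iff_eq_or_lt]
  have hfiber (t : P) (ht : t ≤ z) : (Finset.univ.filter fun f ↦ r f ≤ z).filter (r · = t) =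
      Finset.univ.filter fun f ↦ r f = t := by
    ext f
    simp only [Finset.mem_filter, Finset.mem_univ, true_and]
    exact ⟨fun hf ↦ hf.2, fun hf ↦ ⟨hf ▸ ht, hf⟩⟩
  rw [hins, Finset.sum_insert (by simp), hfiber z le_rfl]
  exact congrArg _ <| Finset.sum_congr rfl fun t ht ↦ by
    rw [hfiber t (by simpa using (Finset.mem_filter.1 ht).2.le)]

/-- Over a finite field, if `X` and `X'` admit the same number of intertwiners to every
subrepresentation of `Y`, then they have the same number of intertwiners with any given range. -/
theorem natCard_range_eq_of_finrank_eq [Finite k] [FiniteDimensional k X] [FiniteDimensional k Y]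
    {X' : Type*} [AddCommGroup X'] [Module k X']
    [LieRingModule h X'] [FiniteDimensional k X']
    (H : ∀ Z : LieSubmodule k h Y,
      Module.finrank k (X →ₗ⁅k, h⁆ Z) = Module.finrank k (X' →ₗ⁅k, h⁆ Z))
    (Z : LieSubmodule k h Y) :
    Nat.card {f : X →ₗ⁅k, h⁆ Y // f.range = Z} = Nat.card {f : X' →ₗ⁅k, h⁆ Y // f.range = Z} := by
  classical
  have := Module.finite_of_finite k (M := Y)
  have := finiteDimensional (k := k) (h := h) (X := X) (Y := Y)
  have := finiteDimensional (k := k) (h := h) (X := X') (Y := Y)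
  have := Module.finite_of_finite k (M := X →ₗ⁅k, h⁆ Y)
  have := Module.finite_of_finite k (M := X' →ₗ⁅k, h⁆ Y)
  have : Finite (LieSubmodule k h Y) := Finite.of_injective _ SetLike.coe_injective
  have := Fintype.ofFinite (LieSubmodule k h Y)
  have := Fintype.ofFinite (X →ₗ⁅k, h⁆ Y)
  have := Fintype.ofFinite (X' →ₗ⁅k, h⁆ Y)
  have hle (Z : LieSubmodule k h Y) : Nat.card {f : X →ₗ⁅k, h⁆ Y // f.range ≤ Z} =
      Nat.card {f : X' →ₗ⁅k, h⁆ Y // f.range ≤ Z} := by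
    have := finiteDimensional (k := k) (h := h) (X := X) (Y := Z)
    have := finiteDimensional (k := k) (h := h) (X := X') (Y := Z)
    rw [← Nat.card_congr (equivRangeLe Z), ← Nat.card_congr (equivRangeLe Z),
      Module.natCard_eq_pow_finrank (K := k) (V := X →ₗ⁅k, h⁆ Z),
      Module.natCard_eq_pow_finrank (K := k) (V := X' →ₗ⁅k, h⁆ Z), H]
  simp only [Nat.card_eq_fintype_card, Fintype.card_subtype] at hle ⊢
  induction Z using WellFoundedLT.induction with
  | ind Z ih =>
    have hZ := hle Z
    rw [card_filter_le_eq, card_filter_le_eq,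
      Finset.sum_congr rfl fun T hT ↦ ih T (by simpa using hT)] at hZ
    exact Nat.add_right_cancel hZ

end Finite

section BaseChange

variable {k K h X Y : Type*} [Field k] [Field K] [Algebra k K] [LieRing h] [LieAlgebra k h]
  [AddCommGroup X] [Module k X] [LieRingModule h X]
  [AddCommGroup Y] [Module k Y] [LieRingModule h Y] [LieModule k h Y]

/-- Contraction of the scalars of `K ⊗[k] Y` along a `k`-linear form on `K`, as a `k`-linear map. -/
noncomputable def contract (Y : Type*) [AddCommGroup Y] [Module k Y] (l : K →ₗ[k] k) :
    K ⊗[k] Y →ₗ[k] Y :=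
  (TensorProduct.lid k Y).toLinearMap ∘ₗ l.rTensor Y

@[simp]
theorem contract_tmul (l : K →ₗ[k] k) (a : K) (y : Y) : contract Y l (a ⊗ₜ y) = l a • y := by
  simp [contract]

theorem contract_lie (l : K →ₗ[k] k) (x : h) (m : K ⊗[k] Y) :
    contract Y l ⁅(1 : K) ⊗ₜ[k] x, m⁆ = ⁅x, contract Y l m⁆ := by
  induction m with
  | zero => simp
  | tmul a y => simp
  | add m n hm hn => simp [hm, hn]

/-- Base changes of linearly independent intertwiners are linearly independent. -/
theorem eq_zero_of_sum_smul_baseChange_eq_zero {ι : Type*} [Fintype ι] {g : ι → X →ₗ⁅k, h⁆ Y}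
    (hg : LinearIndependent k g) (c : ι → K)
    (hc : ∀ x : X, ∑ j, c j ⊗ₜ[k] g j x = 0) : c = 0 := by
  rw [Fintype.linearIndependent_iff] at hg
  funext j
  let b := Module.Basis.ofVectorSpace k K
  refine b.ext_elem fun i ↦ ?_
  have : ∑ j, b.coord i (c j) • g j = 0 := by
    ext x
    have h1 := congrArg (contract Y (b.coord i)) (hc x)
    have h2 := LinearMap.congr_fun
      (toLinearMap_sum_smul Finset.univ (fun j ↦ b.coord i (c j)) g) x
    refine h2.trans ?_
    simp only [map_sum, contract_tmul, map_zero] at h1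
    rw [LinearMap.sum_apply]
    exact h1
  simpa using hg _ this j

/-- Expansion of a tensor along a basis of the left factor. -/
theorem sum_basis_tmul_contract {ι : Type*} (b : Module.Basis ι k K) (z : K ⊗[k] Y)
    (s : Finset ι) (hs : ∀ i ∉ s, contract Y (b.coord i) z = 0) :
    ∑ i ∈ s, b i ⊗ₜ[k] contract Y (b.coord i) z = z := by
  classical
  have hc (i) : contract Y (b.coord i) z = TensorProduct.equivFinsuppOfBasisLeft b z i :=
    (TensorProduct.equivFinsuppOfBasisLeft_apply b z i).symm
  simp only [hc] at hs ⊢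
  have h1 := (TensorProduct.equivFinsuppOfBasisLeft (N := Y) b).symm_apply_apply z
  rw [TensorProduct.equivFinsuppOfBasisLeft_symm_apply,
    Finsupp.sum_of_support_subset (s := s) _ (fun i hi ↦ by
      by_contra his
      exact (Finsupp.mem_support_iff.1 hi) (hs i his)) _ (by simp)] at h1
  exact h1

theorem exists_contract_eq_zero {ι : Type*} (b : Module.Basis ι k K) (z : K ⊗[k] Y) :
    ∃ s : Finset ι, ∀ i ∉ s, contract Y (b.coord i) z = 0 := by
  classical
  refine ⟨(TensorProduct.equivFinsuppOfBasisLeft b z).support, fun i hi ↦ ?_⟩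
  rw [Finsupp.notMem_support_iff, TensorProduct.equivFinsuppOfBasisLeft_apply] at hi
  exact hi

/-- The base change of an intertwiner lies in the `K`-span of the base changes of a basis. -/
theorem baseChange_mem_span {ι : Type*} [Fintype ι]
    (g : Module.Basis ι k (X →ₗ⁅k, h⁆ Y)) (f : X →ₗ⁅k, h⁆ Y) :
    f.toLinearMap.baseChange K ∈
      Submodule.span K (Set.range fun j ↦ (g j).toLinearMap.baseChange K) := by
  have : f.toLinearMap.baseChange K =
      ∑ j, algebraMap k K (g.repr f j) • (g j).toLinearMap.baseChange K := by
    conv_lhs => rw [← g.sum_repr f, toLinearMap_sum_smul]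
    ext x
    simp [LinearMap.sum_apply, TensorProduct.tmul_sum]
  rw [this]
  exact Submodule.sum_mem _ fun j _ ↦
    Submodule.smul_mem _ _ (Submodule.subset_span (Set.mem_range_self j))

/-- A `K`-linear map `K ⊗ X → K ⊗ Y` commuting with the action of `h` is a `K`-linear combination
of base changes of intertwiners `X → Y`. -/
theorem mem_span_baseChange [LieModule k h X] [FiniteDimensional k X] {ι : Type*} [Fintype ι]
    (g : Module.Basis ι k (X →ₗ⁅k, h⁆ Y)) (F : K ⊗[k] X →ₗ[K] K ⊗[k] Y)
    (hF : ∀ (x : h) (m : K ⊗[k] X), F ⁅(1 : K) ⊗ₜ[k] x, m⁆ = ⁅(1 : K) ⊗ₜ[k] x, F m⁆) :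
    F ∈ Submodule.span K (Set.range fun j ↦ (g j).toLinearMap.baseChange K) := by
  classical
  let b := Module.Basis.ofVectorSpace k K
  let φ (i) : X →ₗ⁅k, h⁆ Y :=
    { contract Y (b.coord i) ∘ₗ F.restrictScalars k ∘ₗ TensorProduct.mk k K X 1 with
      map_lie' := by
        intro x m
        have := hF x ((1 : K) ⊗ₜ m)
        simp only [LieAlgebra.ExtendScalars.bracket_tmul, mul_one] at this
        simp [this, contract_lie] }
  let v := Module.finBasis k X
  choose t ht using fun a ↦ exists_contract_eq_zero b (F (1 ⊗ₜ v a))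
  let s := Finset.univ.biUnion t
  have hsum : F = ∑ i ∈ s, b i • (φ i).toLinearMap.baseChange K := by
    refine (v.baseChange K).ext fun a ↦ ?_
    rw [Module.Basis.baseChange_apply,
      ← sum_basis_tmul_contract b (F (1 ⊗ₜ v a)) s fun i hi ↦
        ht a i fun hia ↦ hi (Finset.mem_biUnion.2 ⟨a, Finset.mem_univ a, hia⟩),
      LinearMap.sum_apply]
    refine Finset.sum_congr rfl fun i _ ↦ ?_
    rw [LinearMap.smul_apply, LinearMap.baseChange_tmul, TensorProduct.smul_tmul', smul_eq_mul,
      mul_one]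
    rfl
  rw [hsum]
  exact Submodule.sum_mem _ fun i _ ↦ Submodule.smul_mem _ _ (baseChange_mem_span g _)

/-- If `X` and `X'` become isomorphic after base change, then the space of intertwiners from `X`
to `Y` is at most as large as the one from `X'` to `Y`. -/
theorem finrank_le_of_baseChange_equiv [LieModule k h X] [FiniteDimensional k X]
    [FiniteDimensional k Y] {X' : Type*}
    [AddCommGroup X'] [Module k X'] [LieRingModule h X'] [LieModule k h X']
    [FiniteDimensional k X'] (e : (K ⊗[k] X) ≃ₗ⁅K, K ⊗[k] h⁆ (K ⊗[k] X')) :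
    Module.finrank k (X →ₗ⁅k, h⁆ Y) ≤ Module.finrank k (X' →ₗ⁅k, h⁆ Y) := by
  have := finiteDimensional (k := k) (h := h) (X := X) (Y := Y)
  have := finiteDimensional (k := k) (h := h) (X := X') (Y := Y)
  let f := Module.finBasis k (X →ₗ⁅k, h⁆ Y)
  let g := Module.finBasis k (X' →ₗ⁅k, h⁆ Y)
  have hmem (i : Fin (Module.finrank k (X →ₗ⁅k, h⁆ Y))) :
      ∃ a : Fin (Module.finrank k (X' →ₗ⁅k, h⁆ Y)) → K,
        ∑ j, a j • (g j).toLinearMap.baseChange K =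
          (f i).toLinearMap.baseChange K ∘ₗ e.symm.toLinearEquiv.toLinearMap := by
    refine (Submodule.mem_span_range_iff_exists_fun K).1 <| mem_span_baseChange g _ fun x m ↦ ?_
    change (f i).toLinearMap.baseChange K (e.symm _) =
      ⁅(1 : K) ⊗ₜ[k] x, (f i).toLinearMap.baseChange K (e.symm m)⁆
    rw [show e.symm ⁅(1 : K) ⊗ₜ[k] x, m⁆ = ⁅(1 : K) ⊗ₜ[k] x, e.symm m⁆ from
      e.symm.toLieModuleHom.map_lie _ _]
    induction e.symm m with
    | zero => simp
    | tmul a y => simp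
    | add m n hm hn => simp only [lie_add, map_add, hm, hn]
  choose a ha using hmem
  have hinj : Function.Injective (Matrix.vecMulLinear (Matrix.of a)) := by
    rw [← LinearMap.ker_eq_bot, LinearMap.ker_eq_bot']
    intro c hc
    refine eq_zero_of_sum_smul_baseChange_eq_zero f.linearIndependent c fun x ↦ ?_
    have hfx (i) : (1 : K) ⊗ₜ[k] f i x =
        ∑ j, a i j • (g j).toLinearMap.baseChange K (e (1 ⊗ₜ x)) := by
      have h1 := LinearMap.congr_fun (ha i) (e (1 ⊗ₜ x))
      rw [LinearMap.sum_apply] at h1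
      refine Eq.trans ?_ h1.symm
      change _ = (f i).toLinearMap.baseChange K (e.symm (e (1 ⊗ₜ x)))
      rw [LieModuleEquiv.symm_apply_apply]
      rfl
    calc ∑ i, c i ⊗ₜ[k] f i x = ∑ i, c i • ((1 : K) ⊗ₜ[k] f i x) := by
          simp [TensorProduct.smul_tmul']
      _ = ∑ j, (∑ i, c i * a i j) • (g j).toLinearMap.baseChange K (e (1 ⊗ₜ x)) := by
          simp only [hfx, Finset.smul_sum, Finset.sum_smul, smul_smul]
          exact Finset.sum_comm
      _ = 0 := Finset.sum_eq_zero fun j _ ↦ by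
          rw [show ∑ i, c i * a i j = 0 from congrFun hc j, zero_smul]
  simpa using LinearMap.finrank_le_finrank_of_injective hinj

/-- Over an infinite field, an intertwining isomorphism after base change gives a bijective
intertwiner over the base field. -/
theorem exists_bijective_of_infinite [Infinite k] [LieModule k h X] [FiniteDimensional k X]
    [FiniteDimensional k Y]
    (e : (K ⊗[k] X) ≃ₗ⁅K, K ⊗[k] h⁆ (K ⊗[k] Y))
    (hXY : Module.finrank k X = Module.finrank k Y) :
    ∃ f : X →ₗ⁅k, h⁆ Y, Function.Bijective f := by
  have := finiteDimensional (k := k) (h := h) (X := X) (Y := Y)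
  let g := Module.finBasis k (X →ₗ⁅k, h⁆ Y)
  let v := Module.finBasis k X
  let w := Module.finBasisOfFinrankEq k Y hXY.symm
  obtain ⟨c, hc⟩ := (Submodule.mem_span_range_iff_exists_fun K).1 <|
    mem_span_baseChange g e.toLinearEquiv.toLinearMap fun x m ↦ e.toLieModuleHom.map_lie _ _
  let P : MvPolynomial (Fin (Module.finrank k (X →ₗ⁅k, h⁆ Y))) k :=
    (Matrix.of fun a b ↦ ∑ j, MvPolynomial.X j * MvPolynomial.C (w.repr (g j (v b)) a)).det
  have hP : P ≠ 0 := by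
    intro h0
    have hu := (e.toLinearEquiv.isUnit_det (v.baseChange K) (w.baseChange K)).ne_zero
    refine hu ?_
    rw [← map_zero (MvPolynomial.aeval (R := k) c), ← h0]
    simp only [P]
    rw [AlgHom.map_det, ← hc]
    congr 1
    ext a b
    simp [LinearMap.toMatrix_apply, LinearMap.sum_apply, Algebra.smul_def, mul_comm]
  obtain ⟨a, ha⟩ : ∃ a, MvPolynomial.eval a P ≠ 0 := by
    by_contra! h0
    exact hP (MvPolynomial.funext fun x ↦ by simpa using h0 x)
  let f : X →ₗ⁅k, h⁆ Y := ∑ j, a j • g j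
  have hf : MvPolynomial.eval a P = (LinearMap.toMatrix v w f.toLinearMap).det := by
    simp only [P]
    rw [RingHom.map_det]
    congr 1
    ext i j
    simp [f, LinearMap.toMatrix_apply, toLinearMap_sum_smul]
  exact ⟨f, (LinearEquiv.ofIsUnitDet (f := f.toLinearMap) (v := v) (v' := w)
    (hf ▸ ha.isUnit)).bijective⟩

end BaseChange

end LieModuleHom

/-- If two finite-dimensional representations of a Lie algebra `𝔥` become
isomorphic after a field extension `k̃/k`, then they are already isomorphic over `k`. -/
theorem stmt_8 (k K h V W : Type*) [Field k] [Field K] [Algebra k K]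
    [LieRing h] [LieAlgebra k h]
    [AddCommGroup V] [Module k V] [LieRingModule h V] [LieModule k h V]
    [FiniteDimensional k V]
    [AddCommGroup W] [Module k W] [LieRingModule h W] [LieModule k h W]
    [FiniteDimensional k W]
    (hiso : Nonempty ((K ⊗[k] V) ≃ₗ⁅K, K ⊗[k] h⁆ (K ⊗[k] W))) :
    Nonempty (V ≃ₗ⁅k, h⁆ W) := by
  obtain ⟨e⟩ := hiso
  have hdim : Module.finrank k V = Module.finrank k W := by
    simpa using e.toLinearEquiv.finrank_eq
  obtain ⟨f, hf⟩ : ∃ f : V →ₗ⁅k, h⁆ W, Function.Bijective f := by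
    cases finite_or_infinite k with
    | inr _ => exact LieModuleHom.exists_bijective_of_infinite e hdim
    | inl _ =>
      have hcard := LieModuleHom.natCard_range_eq_of_finrank_eq (X := W) (X' := V) (Y := W)
        (fun Z : LieSubmodule k h W ↦
          (LieModuleHom.finrank_le_of_baseChange_equiv e.symm).antisymm
            (LieModuleHom.finrank_le_of_baseChange_equiv e)) ⊤
      have := Module.finite_of_finite k (M := W)
      have := LieModuleHom.finiteDimensional (k := k) (h := h) (X := W) (Y := W)
      have := Module.finite_of_finite k (M := W →ₗ⁅k, h⁆ W)
      have : Nonempty {f : W →ₗ⁅k, h⁆ W // f.range = ⊤} :=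
        ⟨LieModuleHom.id, (LieModuleHom.range_eq_top _).2 Function.surjective_id⟩
      obtain ⟨⟨f, hf⟩⟩ := (Nat.card_pos_iff.1 (hcard ▸ Nat.card_pos)).1
      rw [LieModuleHom.range_eq_top] at hf
      exact ⟨f, (LinearMap.injective_iff_surjective_of_finrank_eq_finrank
        (f := f.toLinearMap) hdim).2 hf, hf⟩
  let E := LinearEquiv.ofBijective f.toLinearMap hf
  exact ⟨{ f with
    invFun := E.symm
    left_inv := E.symm_apply_apply
    right_inv := E.apply_symm_apply }⟩
end

section
/- Let $k$ be a field of characteristic zero, and let $W$ be a finite-dimensional irreducible representation of $\mathfrak{sl}(2,k)$ with $\dim W \neq 2$. If $P : W \times W \to \mathfrak{sl}(2,k)$ is a symmetric bilinear map satisfying (1) $P(u,v)(w) + P(v,w)(u) + P(w,u)(v) = 0$ and (2) $[x, P(u,v)] = P(x(u),v) + P(u,x(v))$ for all $x \in \mathfrak{sl}(2,k)$ and $u,v,w \in W$, then $P \equiv 0$. -/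
/-- The Lie algebra `sl(2,k)` of traceless `2 × 2` matrices. -/
abbrev sl2 (k : Type*) [Field k] : Type _ := ↥(LieAlgebra.SpecialLinear.sl (Fin 2) k)

namespace IsSl2Triple

open LieModule Module

variable {k L W : Type*} [Field k] [LieRing L] [LieAlgebra k L]
  [AddCommGroup W] [Module k W] [LieRingModule L W] [LieModule k L W] {h e f : L}

/-- The raising operator of an `sl₂` triple is nilpotent on a finite-dimensional module. -/
lemma isNilpotent_toEnd_e [CharZero k] [FiniteDimensional k W] (t : IsSl2Triple h e f) :
    IsNilpotent (toEnd k L W e) := by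
  by_contra hn
  have hne (n : ℕ) : toEnd k L W e ^ n ≠ 0 := fun h0 ↦ hn ⟨n, h0⟩
  have h1 : toEnd k L W h * toEnd k L W e = toEnd k L W e * toEnd k L W h
      + (2 : k) • toEnd k L W e := by
    ext w
    simp only [Module.End.mul_apply, LinearMap.add_apply, LinearMap.smul_apply, toEnd_apply_apply]
    rw [leibniz_lie, t.lie_h_e_smul k, smul_lie, add_comm]
  have hcomm (n : ℕ) : toEnd k L W h * toEnd k L W e ^ n =
      toEnd k L W e ^ n * toEnd k L W h + (2 * n : k) • toEnd k L W e ^ n := by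
    induction n with
    | zero => simp
    | succ n ih =>
      rw [pow_succ, ← mul_assoc, ih, add_mul, mul_assoc _ (toEnd k L W h), h1, mul_add,
        smul_mul_assoc, mul_smul_comm, ← mul_assoc]
      push_cast
      module
  have hinj : Function.Injective (fun n : ℕ ↦ (2 * n : k)) := fun a b hab ↦ by simpa using hab
  have hli := Module.End.eigenvectors_linearIndependent'
    (LinearMap.mulLeft k (toEnd k L W h) - LinearMap.mulRight k (toEnd k L W h))
    (fun n : ℕ ↦ (2 * n : k)) hinj (fun n ↦ toEnd k L W e ^ n)
    (fun n ↦ ⟨Module.End.mem_eigenspace_iff.mpr (by simp [hcomm]), hne n⟩)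
  exact not_finite_iff_infinite.mpr inferInstance hli.finite

/-- A nontrivial finite-dimensional module over a field of characteristic zero has a primitive
vector, without any assumption of triangularizability. -/
lemma exists_hasPrimitiveVectorWith_of_charZero [CharZero k] [FiniteDimensional k W]
    [Nontrivial W] (t : IsSl2Triple h e f) :
    ∃ (n : ℕ) (v : W), t.HasPrimitiveVectorWith v (n : k) := by
  obtain ⟨n, hn⟩ := t.symm.isNilpotent_toEnd_e (k := k) (W := W)
  obtain ⟨v, hv0, hv⟩ : ∃ v : W, v ≠ 0 ∧ ⁅e, v⁆ = 0 := by
    obtain ⟨r, hr⟩ := t.isNilpotent_toEnd_e (k := k) (W := W)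
    obtain ⟨w, hw⟩ := exists_ne (0 : W)
    obtain ⟨i, hi, hi'⟩ := Nat.exists_not_and_succ_of_not_zero_of_exists
      (p := fun i ↦ (toEnd k L W e ^ i) w = 0) (by simpa using hw) ⟨r, by simp [hr]⟩
    exact ⟨_, hi, by rwa [lie_e_pow_toEnd_e]⟩
  have hhf (j : ℕ) (u : W) : ⁅h, (toEnd k L W f ^ j) u⁆ =
      (toEnd k L W f ^ j) (⁅h, u⁆ - (2 * j : k) • u) := by
    induction j with
    | zero => simp
    | succ j ih =>
      rw [pow_succ', Module.End.mul_apply, Module.End.mul_apply, toEnd_apply_apply,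
        toEnd_apply_apply, leibniz_lie, t.lie_lie_smul_f k, ih]
      simp only [map_sub, map_smul, lie_sub, lie_smul, neg_lie, smul_lie]
      push_cast
      module
  have hef (j : ℕ) (u : W) (hu : ⁅e, u⁆ = 0) : ⁅e, (toEnd k L W f ^ (j + 1)) u⁆ =
      (toEnd k L W f ^ j) ((j + 1 : k) • (⁅h, u⁆ - (j : k) • u)) := by
    induction j with
    | zero => simp [leibniz_lie e, t.lie_e_f, hu]
    | succ j ih =>
      rw [pow_succ', Module.End.mul_apply, toEnd_apply_apply, leibniz_lie, t.lie_e_f, ih, hhf,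
        ← toEnd_apply_apply k L W f, ← Module.End.mul_apply, ← pow_succ', ← map_add]
      congr 1
      push_cast
      module
  have key : ∀ j : ℕ, ∀ u : W, u ≠ 0 → ⁅e, u⁆ = 0 → (toEnd k L W f ^ j) u = 0 →
      ∃ (n : ℕ) (v : W), t.HasPrimitiveVectorWith v (n : k) := by
    intro j
    induction j with
    | zero => intro u hu _ h0; exact absurd (by simpa using h0) hu
    | succ j ih =>
      intro u hu heu h0
      by_cases hz : ⁅h, u⁆ - (j : k) • u = 0
      · exact ⟨j, u, hu, sub_eq_zero.mp hz, heu⟩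
      · refine ih _ hz ?_ ?_
        · rw [lie_sub, leibniz_lie, ← lie_skew, t.lie_h_e_smul k]
          simp [heu]
        · have := hef j u heu
          rw [h0, lie_zero, map_smul] at this
          exact (smul_eq_zero_iff_right (Nat.cast_add_one_ne_zero j)).mp this.symm
  exact key n v hv0 hv (by simp [hn])

/-- In an irreducible module, a nonzero subspace stable under an `sl₂` triple spanning the Lie
algebra is everything. -/
lemma submodule_eq_top [LieModule.IsIrreducible k L W]
    (hspan : ∀ x : L, ∃ a b c : k, x = a • e + b • h + c • f) (N : Submodule k W)
    (he : ∀ w ∈ N, ⁅e, w⁆ ∈ N) (hh : ∀ w ∈ N, ⁅h, w⁆ ∈ N) (hf : ∀ w ∈ N, ⁅f, w⁆ ∈ N)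
    {v : W} (hv : v ∈ N) (hv0 : v ≠ 0) : N = ⊤ := by
  let N' : LieSubmodule k L W :=
    { N with
      lie_mem := by
        intro x w hw
        obtain ⟨a, b, c, rfl⟩ := hspan x
        simp only [add_lie, smul_lie]
        exact N.add_mem (N.add_mem (N.smul_mem _ (he w hw)) (N.smul_mem _ (hh w hw)))
          (N.smul_mem _ (hf w hw)) }
  have hN : N' = ⊤ := by
    refine (eq_bot_or_eq_top N').resolve_left fun hb ↦ hv0 ?_
    have : v ∈ N' := hv
    simpa [hb] using this
  exact congrArg LieSubmodule.toSubmodule hN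

/-- The Casimir operator acts on an irreducible module of highest weight `μ` as `μ² + 2μ`. -/
lemma HasPrimitiveVectorWith.casimir_apply [LieModule.IsIrreducible k L W]
    {t : IsSl2Triple h e f} {v : W} {μ : k} (hv : t.HasPrimitiveVectorWith v μ)
    (hspan : ∀ x : L, ∃ a b c : k, x = a • e + b • h + c • f) (w : W) :
    ⁅h, ⁅h, w⁆⁆ - (2 : k) • ⁅h, w⁆ + (4 : k) • ⁅e, ⁅f, w⁆⁆ = (μ ^ 2 + 2 * μ) • w := by
  have heh (w : W) : ⁅h, ⁅e, w⁆⁆ = ⁅e, ⁅h, w⁆⁆ + (2 : k) • ⁅e, w⁆ := by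
    rw [leibniz_lie, t.lie_h_e_smul k, smul_lie]; abel
  have hfh (w : W) : ⁅h, ⁅f, w⁆⁆ = ⁅f, ⁅h, w⁆⁆ - (2 : k) • ⁅f, w⁆ := by
    rw [leibniz_lie, t.lie_lie_smul_f k, neg_lie, smul_lie]; abel
  have hef (w : W) : ⁅e, ⁅f, w⁆⁆ = ⁅f, ⁅e, w⁆⁆ + ⁅h, w⁆ := by
    rw [leibniz_lie, t.lie_e_f]; abel
  let E := toEnd k L W e
  let H := toEnd k L W h
  let F := toEnd k L W f
  let C : End k W := H * H - (2 : k) • H + (4 : k) • (E * F)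
  have hC (w : W) : C w = ⁅h, ⁅h, w⁆⁆ - (2 : k) • ⁅h, w⁆ + (4 : k) • ⁅e, ⁅f, w⁆⁆ := rfl
  have hCe (w : W) : C ⁅e, w⁆ = ⁅e, C w⁆ := by
    simp only [hC, heh, hef, lie_add, lie_sub, lie_smul]; module
  have hCh (w : W) : C ⁅h, w⁆ = ⁅h, C w⁆ := by
    simp only [hC, heh, hfh, hef, lie_add, lie_sub, lie_smul]; module
  have hCf (w : W) : C ⁅f, w⁆ = ⁅f, C w⁆ := by
    simp only [hC, hfh, hef, lie_add, lie_sub, lie_smul]; module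
  have htop : C.eigenspace (μ ^ 2 + 2 * μ) = ⊤ := by
    refine submodule_eq_top hspan _ ?_ ?_ ?_ (v := v) ?_ hv.ne_zero
    · intro w hw
      rw [Module.End.mem_eigenspace_iff] at hw ⊢
      rw [hCe, hw, lie_smul]
    · intro w hw
      rw [Module.End.mem_eigenspace_iff] at hw ⊢
      rw [hCh, hw, lie_smul]
    · intro w hw
      rw [Module.End.mem_eigenspace_iff] at hw ⊢
      rw [hCf, hw, lie_smul]
    · rw [Module.End.mem_eigenspace_iff]
      simp only [hC, hef, hv.lie_h, hv.lie_e, lie_zero, lie_smul]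
      module
  rw [← hC]
  exact Module.End.mem_eigenspace_iff.mp (htop ▸ Submodule.mem_top)

/-- The irreducible module of highest weight `1` has dimension `2`. -/
lemma HasPrimitiveVectorWith.finrank_eq_two [CharZero k] [FiniteDimensional k W]
    [LieModule.IsIrreducible k L W] {t : IsSl2Triple h e f} {v : W}
    (hv : t.HasPrimitiveVectorWith v (1 : k))
    (hspan : ∀ x : L, ∃ a b c : k, x = a • e + b • h + c • f) : finrank k W = 2 := by
  have hefv : ⁅e, ⁅f, v⁆⁆ = v := by
    rw [leibniz_lie, t.lie_e_f, hv.lie_h, hv.lie_e]; simp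
  have hhfv : ⁅h, ⁅f, v⁆⁆ = -⁅f, v⁆ := by
    rw [leibniz_lie, t.lie_lie_smul_f k, hv.lie_h, neg_lie, smul_lie]; simp; module
  have hffv : ⁅f, ⁅f, v⁆⁆ = 0 := by
    simpa [pow_succ'] using hv.pow_toEnd_f_eq_zero_of_eq_nat (n := 1) (by simp)
  have hli : LinearIndependent k ![v, ⁅f, v⁆] := by
    rw [LinearIndependent.pair_iff]
    intro a b hab
    have hb := congrArg (⁅e, ·⁆) hab
    simp only [lie_add, lie_smul, hv.lie_e, hefv, smul_zero, zero_add, lie_zero] at hb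
    have hb0 := (smul_eq_zero_iff_left hv.ne_zero).mp hb
    subst hb0
    simpa [hv.ne_zero] using hab
  have htop : Submodule.span k (Set.range ![v, ⁅f, v⁆]) = ⊤ := by
    have hmem (w : W) : w ∈ Submodule.span k (Set.range ![v, ⁅f, v⁆]) ↔
        ∃ a b : k, a • v + b • ⁅f, v⁆ = w := by
      rw [Matrix.range_cons_cons_empty, Submodule.mem_span_pair]
    refine submodule_eq_top hspan _ ?_ ?_ ?_ (v := v) ((hmem v).mpr ⟨1, 0, by simp⟩) hv.ne_zero
    · intro w hw
      obtain ⟨a, b, rfl⟩ := (hmem w).mp hw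
      exact (hmem _).mpr ⟨b, 0, by simp [hv.lie_e, hefv]⟩
    · intro w hw
      obtain ⟨a, b, rfl⟩ := (hmem w).mp hw
      exact (hmem _).mpr ⟨a, -b, by simp [hv.lie_h, hhfv]⟩
    · intro w hw
      obtain ⟨a, b, rfl⟩ := (hmem w).mp hw
      exact (hmem _).mpr ⟨0, a, by simp [hffv]⟩
  simpa using finrank_eq_card_basis (Basis.mk hli htop.ge)

/-- A Lie algebra spanned by an `sl₂` triple has trivial center. -/
lemma eq_zero_of_lie_eq_zero [CharZero k] (t : IsSl2Triple h e f)
    (hspan : ∀ x : L, ∃ a b c : k, x = a • e + b • h + c • f) {x : L}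
    (hx : ∀ y : L, ⁅y, x⁆ = 0) : x = 0 := by
  obtain ⟨a, b, c, rfl⟩ := hspan x
  have heh : ⁅e, h⁆ = -((2 : k) • e) := by rw [← lie_skew, t.lie_h_e_smul k]
  have h1 := hx h
  simp only [lie_add, lie_smul, t.lie_h_e_smul k, t.lie_lie_smul_f k, lie_self] at h1
  have h2 := congrArg (⁅e, ·⁆) h1
  simp only [lie_add, lie_smul, lie_neg, lie_self, t.lie_e_f, lie_zero, smul_zero, zero_add,
    smul_neg, neg_eq_zero, smul_smul, smul_eq_zero, mul_eq_zero, t.h_ne_zero, or_false,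
    OfNat.ofNat_ne_zero] at h2
  subst h2
  simp only [smul_zero, zero_smul, add_zero, smul_smul, smul_eq_zero, mul_eq_zero, t.e_ne_zero,
    or_false, OfNat.ofNat_ne_zero] at h1
  subst h1
  have h3 := hx e
  simp only [lie_smul, heh, zero_smul, zero_add, add_zero, smul_neg, neg_eq_zero,
    smul_smul, smul_eq_zero, mul_eq_zero, t.e_ne_zero, or_false, OfNat.ofNat_ne_zero] at h3
  simp [h3]

/-- An equivariant symmetric bilinear map satisfying the cyclic identity, from an irreducible
module of dimension other than two to a Lie algebra spanned by an `sl₂` triple, vanishes. -/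
theorem symmetric_equivariant_eq_zero [CharZero k] [FiniteDimensional k W]
    [LieModule.IsIrreducible k L W] (t : IsSl2Triple h e f)
    (hspan : ∀ x : L, ∃ a b c : k, x = a • e + b • h + c • f)
    (hdim : finrank k W ≠ 2) (P : W →ₗ[k] W →ₗ[k] L) (hsymm : ∀ u v : W, P u v = P v u)
    (hcyc : ∀ u v w : W, ⁅P u v, w⁆ + ⁅P v w, u⁆ + ⁅P w u, v⁆ = 0)
    (hequiv : ∀ (x : L) (u v : W), ⁅x, P u v⁆ = P ⁅x, u⁆ v + P u ⁅x, v⁆) :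
    P = 0 := by
  have : Nontrivial W := LieModule.nontrivial_of_isIrreducible k L W
  obtain ⟨m, v, hv⟩ := t.exists_hasPrimitiveVectorWith_of_charZero (k := k) (W := W)
  suffices hPv : P v = 0 by
    rw [← LinearMap.ker_eq_top]
    have hstable (x : L) (w : W) (hw : w ∈ LinearMap.ker P) : ⁅x, w⁆ ∈ LinearMap.ker P := by
      rw [LinearMap.mem_ker] at hw ⊢
      ext u
      simpa [hw] using (hequiv x w u).symm
    exact submodule_eq_top hspan _ (hstable e) (hstable h) (hstable f)
      (LinearMap.mem_ker.mpr hPv) hv.ne_zero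
  rcases eq_or_ne m 0 with rfl | hm0
  · have hfv : ⁅f, v⁆ = 0 := by
      simpa using hv.pow_toEnd_f_eq_zero_of_eq_nat (n := 0) rfl
    have hlie (x : L) : ⁅x, v⁆ = 0 := by
      obtain ⟨a, b, c, rfl⟩ := hspan x
      simp [hv.lie_e, hv.lie_h, hfv]
    have htriv : maxTrivSubmodule k L W = ⊤ := by
      refine (eq_bot_or_eq_top _).resolve_left fun hb ↦ hv.ne_zero ?_
      have : v ∈ maxTrivSubmodule k L W := (mem_maxTrivSubmodule k L W v).mpr hlie
      simpa [hb] using this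
    have hzero (x : L) (w : W) : ⁅x, w⁆ = 0 :=
      (mem_maxTrivSubmodule k L W w).mp (htriv ▸ LieSubmodule.mem_top w) x
    ext w
    exact t.eq_zero_of_lie_eq_zero hspan fun y ↦ by simp [hequiv, hzero]
  have hm1 : m ≠ 1 := by
    rintro rfl
    exact hdim (HasPrimitiveVectorWith.finrank_eq_two (t := t) (by simpa using hv) hspan)
  have hm0' : (m : k) ≠ 0 := Nat.cast_ne_zero.mpr hm0
  have hPvv : P v v = 0 := by
    have hw : ⁅h, P v v⁆ = (2 * m : k) • P v v := by
      rw [hequiv, hv.lie_h, map_smul, map_smul, LinearMap.smul_apply]; module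
    have hcube : ⁅h, ⁅h, ⁅h, P v v⁆⁆⁆ = (4 : k) • ⁅h, P v v⁆ := by
      obtain ⟨a, b, c, hx⟩ := hspan (P v v)
      rw [hx]
      simp only [lie_add, lie_smul, lie_neg, t.lie_h_e_smul k, t.lie_lie_smul_f k, lie_self,
        lie_zero]
      module
    simp only [hw, lie_smul, smul_smul] at hcube
    rw [← sub_eq_zero, ← sub_smul, smul_eq_zero] at hcube
    refine hcube.resolve_left ?_
    have hne1 : (m : k) - 1 ≠ 0 := sub_ne_zero.mpr (by exact_mod_cast hm1)
    have hne2 : (m : k) + 1 ≠ 0 := Nat.cast_add_one_ne_zero m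
    have : (2 * m * (2 * m) * (2 * m) - 4 * (2 * m) : k) = 8 * m * (m - 1) * (m + 1) := by ring
    rw [this]
    exact mul_ne_zero (mul_ne_zero (mul_ne_zero (by norm_num) hm0') hne1) hne2
  have hPvw_v (w : W) : ⁅P v w, v⁆ = 0 := by
    have := hcyc v v w
    rw [hPvv, zero_lie, zero_add, hsymm w v, ← two_smul k, smul_eq_zero] at this
    exact this.resolve_left two_ne_zero
  have hPvw (w : W) : ∃ a : k, P v w = a • e := by
    obtain ⟨a, b, c, hx⟩ := hspan (P v w)
    have h1 := hPvw_v w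
    simp only [hx, add_lie, smul_lie, hv.lie_e, hv.lie_h, smul_zero, zero_add] at h1
    have h2 := congrArg (⁅e, ·⁆) h1
    simp only [lie_add, lie_smul, hv.lie_e, hv.lie_h, leibniz_lie e f, t.lie_e_f, smul_zero,
      lie_zero, zero_add, add_zero, smul_smul, smul_eq_zero, mul_eq_zero, hv.ne_zero, hm0',
      or_false] at h2
    subst h2
    simp only [zero_smul, add_zero, smul_smul, smul_eq_zero, mul_eq_zero, hv.ne_zero, hm0',
      or_false] at h1
    subst h1
    exact ⟨a, by simpa using hx⟩
  have hPe (w : W) : P v ⁅e, w⁆ = 0 := by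
    obtain ⟨a, ha⟩ := hPvw w
    simpa [ha, hv.lie_e] using (hequiv e v w).symm
  have hPh (w : W) : P v ⁅h, w⁆ = (2 - m : k) • P v w := by
    obtain ⟨a, ha⟩ := hPvw w
    have := hequiv h v w
    rw [hv.lie_h, map_smul, LinearMap.smul_apply, ha, lie_smul, t.lie_h_e_smul k,
      ← sub_eq_iff_eq_add'] at this
    rw [← this, ha]
    module
  ext w
  have hC := congrArg (P v) (hv.casimir_apply hspan w)
  simp only [map_add, map_sub, map_smul, hPe, hPh, smul_zero, add_zero] at hC
  rw [← sub_eq_zero] at hC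
  have hC' : (-4 * m : k) • P v w = 0 := by
    rw [← hC]; module
  simpa [hm0'] using hC'

end IsSl2Triple

/-- The standard matrices form an `sl₂` triple spanning `sl2 k`. -/
lemma exists_isSl2Triple_sl2 (k : Type*) [Field k] :
    ∃ h e f : sl2 k, IsSl2Triple h e f ∧
      ∀ x : sl2 k, ∃ a b c : k, x = a • e + b • h + c • f := by
  have hmem (A : Matrix (Fin 2) (Fin 2) k) :
      A ∈ LieAlgebra.SpecialLinear.sl (Fin 2) k ↔ A 0 0 + A 1 1 = 0 := by
    rw [← Matrix.trace_fin_two]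
    exact LinearMap.mem_ker
  refine ⟨⟨!![1, 0; 0, -1], (hmem _).mpr (by simp)⟩, ⟨!![0, 1; 0, 0], (hmem _).mpr (by simp)⟩,
    ⟨!![0, 0; 1, 0], (hmem _).mpr (by simp)⟩, ⟨?_, ?_, ?_, ?_⟩, ?_⟩
  · intro h0
    simpa using congrFun (congrFun (congrArg Subtype.val h0) 0) 0
  · ext i j
    fin_cases i <;> fin_cases j <;> simp [Ring.lie_def]
  · ext i j
    fin_cases i <;> fin_cases j <;>
      simp [Ring.lie_def, one_add_one_eq_two]
  · ext i j
    fin_cases i <;> fin_cases j <;>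
      simp [Ring.lie_def]
    ring
  · rintro ⟨A, hA⟩
    rw [hmem, add_comm, add_eq_zero_iff_eq_neg] at hA
    refine ⟨A 0 1, A 0 0, A 1 0, ?_⟩
    ext i j
    fin_cases i <;> fin_cases j <;> simp [hA]

/-- Over a field of characteristic zero, if `W` is a finite-dimensional
irreducible representation of `sl(2,k)` with `dim W ≠ 2` and `P : W × W → sl(2,k)` is a
symmetric bilinear map satisfying relations (1) and (2), then `P ≡ 0`. -/
theorem stmt_9 (k W : Type*) [Field k] [CharZero k]
    [AddCommGroup W] [Module k W] [LieRingModule (sl2 k) W] [LieModule k (sl2 k) W]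
    [FiniteDimensional k W] [LieModule.IsIrreducible k (sl2 k) W]
    (hdim : Module.finrank k W ≠ 2)
    (P : W →ₗ[k] W →ₗ[k] sl2 k) (hPsymm : ∀ u v : W, P u v = P v u)
    (h1 : ∀ u v w : W, ⁅P u v, w⁆ + ⁅P v w, u⁆ + ⁅P w u, v⁆ = 0)
    (h2 : ∀ (x : sl2 k) (u v : W), ⁅x, P u v⁆ = P ⁅x, u⁆ v + P u ⁅x, v⁆) :
    ∀ u v : W, P u v = 0 := by
  obtain ⟨h, e, f, t, hspan⟩ := exists_isSl2Triple_sl2 k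
  intro u v
  simp [t.symmetric_equivariant_eq_zero hspan hdim P hPsymm h1 h2]
end

section
/- Let $k$ be a field of characteristic zero, $V$ a finite-dimensional representation of $\mathfrak{sl}(2,k)$, and $W \subseteq V$ a non-trivial irreducible submodule with $\dim W \neq 3$. If $P : V \times V \to \mathfrak{sl}(2,k)$ is a symmetric bilinear map satisfying relations (1) $P(u,v)(w) + P(v,w)(u) + P(w,u)(v) = 0$ and (2) $[x, P(u,v)] = P(x(u),v) + P(u,x(v))$, and $P(W,W) = \{0\}$, then $P \equiv 0$. -/
namespace IsSl2Triple

open LieModule Module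

section

variable {k L M : Type*} [Field k] [CharZero k] [LieRing L] [LieAlgebra k L]
  [AddCommGroup M] [Module k M] [LieRingModule L M] [LieModule k L M] {h e f : L}

lemma exists_toEnd_e_pow_eq_zero [FiniteDimensional k M] (t : IsSl2Triple h e f) :
    ∃ n : ℕ, (toEnd k L M e) ^ n = 0 := by
  by_contra! hne
  set H := toEnd k L M h
  set E := toEnd k L M e
  have hHE : H * E - E * H = (2 : k) • E := by
    ext v
    simp [H, E, ← lie_lie, t.lie_h_e_smul k]
  have key (n : ℕ) : H * E ^ n - E ^ n * H = (2 * n : k) • E ^ n := by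
    induction n with
    | zero => simp
    | succ n ih =>
      have : H * E ^ (n + 1) - E ^ (n + 1) * H =
          (H * E ^ n - E ^ n * H) * E + E ^ n * (H * E - E * H) := by
        rw [pow_succ]
        noncomm_ring
      rw [this, ih, hHE, smul_mul_assoc, mul_smul_comm, ← pow_succ, ← add_smul]
      congr 1
      push_cast
      ring
  refine (Set.infinite_range_of_injective (f := fun n : ℕ ↦ (2 * n : k))
    (fun a b hab ↦ by simpa using hab)) <|
    (End.finite_hasEigenvalue (LinearMap.mulLeft k H - LinearMap.mulRight k H)).subset ?_
  rintro _ ⟨n, rfl⟩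
  exact End.hasEigenvalue_of_hasEigenvector
    ((End.hasEigenvector_iff).2 ⟨by simpa [End.mem_eigenspace_iff] using key n, hne n⟩)

lemma lie_h_toEnd_f_pow (t : IsSl2Triple h e f) (v : M) (n : ℕ) :
    ⁅h, (toEnd k L M f ^ n) v⁆ = (toEnd k L M f ^ n) (⁅h, v⁆ - (2 * n : k) • v) := by
  induction n with
  | zero => simp
  | succ n ih =>
    simp only [pow_succ', Module.End.mul_apply, toEnd_apply_apply] at ih ⊢
    rw [leibniz_lie h, t.lie_lie_smul_f k, ih]
    simp only [map_sub, map_smul, lie_sub, lie_smul, neg_lie, smul_lie]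
    push_cast
    module

lemma lie_e_toEnd_f_pow_succ (t : IsSl2Triple h e f) {v : M} (hv : ⁅e, v⁆ = 0) (n : ℕ) :
    ⁅e, (toEnd k L M f ^ (n + 1)) v⁆ =
      (n + 1 : k) • (toEnd k L M f ^ n) (⁅h, v⁆ - (n : k) • v) := by
  induction n with
  | zero => simp [leibniz_lie e, t.lie_e_f, hv]
  | succ n ih =>
    rw [pow_succ', Module.End.mul_apply, toEnd_apply_apply, leibniz_lie e, t.lie_e_f, ih,
      t.lie_h_toEnd_f_pow]
    simp only [pow_succ', Module.End.mul_apply, toEnd_apply_apply]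
    simp only [map_sub, map_smul, lie_sub, lie_smul]
    push_cast
    module

variable (k M) in
/-- Unlike `IsSl2Triple.exists_hasPrimitiveVectorWith`, no triangularizability is assumed. -/
lemma exists_nat_hasPrimitiveVectorWith [FiniteDimensional k M] [Nontrivial M]
    (t : IsSl2Triple h e f) :
    ∃ (n : ℕ) (m : M), HasPrimitiveVectorWith t m (n : k) := by
  obtain ⟨N, hN⟩ := exists_toEnd_e_pow_eq_zero (k := k) (M := M) t
  obtain ⟨v, hv0, hv⟩ : ∃ v : M, v ≠ 0 ∧ ⁅e, v⁆ = 0 := by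
    obtain ⟨x, hx⟩ := exists_ne (0 : M)
    obtain ⟨n, hn, hn'⟩ := Nat.exists_not_and_succ_of_not_zero_of_exists
      (p := fun n ↦ (toEnd k L M e ^ n) x = 0) (by simpa using hx) ⟨N, by simp [hN]⟩
    exact ⟨_, hn, by simpa [pow_succ'] using hn'⟩
  obtain ⟨N', hN'⟩ := exists_toEnd_e_pow_eq_zero (k := k) (M := M) t.symm
  obtain ⟨n, hn, hn'⟩ := Nat.exists_not_and_succ_of_not_zero_of_exists
    (p := fun n ↦ ∀ w : M, ⁅e, w⁆ = 0 → (toEnd k L M f ^ n) w = 0)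
    (fun H ↦ hv0 (by simpa using H v hv)) ⟨N', by simp [hN']⟩
  set K := LinearMap.ker (toEnd k L M e)
  have hK : ∀ x ∈ K, (toEnd k L M h - (n : k) • 1) x ∈ K := fun x hx ↦ by
    have hx' : ⁅e, x⁆ = 0 := by simpa [K] using hx
    have : ⁅e, ⁅h, x⁆⁆ = 0 := by
      rw [leibniz_lie e, hx', ← lie_skew, t.lie_h_e_smul k, neg_lie, smul_lie, hx']
      simp
    simp [K, this, hx']
  set g : K →ₗ[k] K := (toEnd k L M h - (n : k) • 1).restrict hK
  have hg : ¬ Function.Injective g := fun hinj ↦ hn fun w hw ↦ by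
    obtain ⟨⟨u, hu⟩, hgu⟩ := LinearMap.injective_iff_surjective.1 hinj ⟨w, by simpa [K] using hw⟩
    have hu' : ⁅e, u⁆ = 0 := by simpa [K] using hu
    have huw : ⁅h, u⁆ - (n : k) • u = w := by
      simpa [g, LinearMap.restrict_apply] using congrArg Subtype.val hgu
    have := t.lie_e_toEnd_f_pow_succ (k := k) hu' n
    rw [hn' u hu', lie_zero, huw] at this
    exact (smul_eq_zero.1 this.symm).resolve_left (Nat.cast_add_one_ne_zero n)
  rw [← LinearMap.ker_eq_bot, Submodule.eq_bot_iff] at hg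
  push Not at hg
  obtain ⟨⟨u, hu⟩, hgu, hu0⟩ := hg
  refine ⟨n, u, fun hh ↦ hu0 (by simp [hh]), ?_, by simpa [K] using hu⟩
  simpa [g, LinearMap.restrict_apply, sub_eq_zero] using congrArg Subtype.val hgu

/-- An irreducible module generated by a primitive vector of weight `n` has dimension `n + 1`. -/
lemma HasPrimitiveVectorWith.finrank_eq [FiniteDimensional k M] [IsIrreducible k L M]
    {t : IsSl2Triple h e f} (ht : ∀ x : L, ∃ a b c : k, x = a • e + b • h + c • f)
    {n : ℕ} {m : M} (p : HasPrimitiveVectorWith t m (n : k)) :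
    finrank k M = n + 1 := by
  set ψ : Fin (n + 1) → M := fun i ↦ (toEnd k L M f ^ (i : ℕ)) m
  have hli : LinearIndependent k ψ := by
    refine End.eigenvectors_linearIndependent' (toEnd k L M h)
      (fun i : Fin (n + 1) ↦ (n - 2 * (i : ℕ) : k)) (fun i j hij ↦ ?_) ψ fun i ↦ ?_
    · simpa [Fin.ext_iff] using hij
    · rw [End.hasEigenvector_iff, End.mem_eigenspace_iff]
      exact ⟨p.lie_h_pow_toEnd_f i, p.pow_toEnd_f_ne_zero_of_eq_nat rfl (by lia)⟩
  have hmem (i : ℕ) : (toEnd k L M f ^ i) m ∈ Submodule.span k (Set.range ψ) := by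
    rcases Nat.lt_or_ge i (n + 1) with hi | hi
    · exact Submodule.subset_span ⟨⟨i, hi⟩, rfl⟩
    · rw [← Nat.sub_add_cancel hi, pow_add, Module.End.mul_apply,
        p.pow_toEnd_f_eq_zero_of_eq_nat rfl, map_zero]
      exact zero_mem _
  let N : LieSubmodule k L M :=
    { Submodule.span k (Set.range ψ) with
      lie_mem := fun {x v} hv ↦ by
        change v ∈ Submodule.span k (Set.range ψ) at hv
        change ⁅x, v⁆ ∈ Submodule.span k (Set.range ψ)
        induction hv using Submodule.span_induction with
        | zero => simp
        | add u v _ _ hu hv => rw [lie_add]; exact add_mem hu hv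
        | smul c u _ hu => rw [lie_smul]; exact Submodule.smul_mem _ c hu
        | mem u hu =>
          obtain ⟨⟨i, hi⟩, rfl⟩ := hu
          obtain ⟨a, b, c, rfl⟩ := ht x
          simp only [ψ, add_lie, smul_lie]
          refine add_mem (add_mem (Submodule.smul_mem _ _ ?_) (Submodule.smul_mem _ _ ?_))
            (Submodule.smul_mem _ _ ?_)
          · cases i with
            | zero => simp [p.lie_e]
            | succ i =>
              rw [p.lie_e_pow_succ_toEnd_f]
              exact Submodule.smul_mem _ _ (hmem i)
          · rw [p.lie_h_pow_toEnd_f]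
            exact Submodule.smul_mem _ _ (hmem i)
          · rw [p.lie_f_pow_toEnd_f]
            exact hmem (i + 1) }
  have hN : N = ⊤ := by
    refine (IsSimpleOrder.eq_bot_or_eq_top N).resolve_left fun hbot ↦ p.ne_zero ?_
    have : m ∈ N := hmem 0
    simpa [hbot] using this
  have hspan : Submodule.span k (Set.range ψ) = ⊤ := congrArg LieSubmodule.toSubmodule hN
  rw [← finrank_top, ← hspan, finrank_span_eq_card hli, Fintype.card_fin]

lemma HasPrimitiveVectorWith.weight_ne_zero [FiniteDimensional k M] [IsIrreducible k L M]
    {t : IsSl2Triple h e f} (ht : ∀ x : L, ∃ a b c : k, x = a • e + b • h + c • f)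
    (hM : ∃ (x : L) (m : M), ⁅x, m⁆ ≠ 0)
    {n : ℕ} {m : M} (p : HasPrimitiveVectorWith t m (n : k)) : n ≠ 0 := by
  rintro rfl
  have hf : ⁅f, m⁆ = 0 := by simpa using p.pow_toEnd_f_eq_zero_of_eq_nat rfl
  have hm : m ∈ maxTrivSubmodule k L M := fun x ↦ by
    obtain ⟨a, b, c, rfl⟩ := ht x
    simp [p.lie_e, p.lie_h, hf]
  obtain ⟨x, w, hxw⟩ := hM
  rcases IsSimpleOrder.eq_bot_or_eq_top (maxTrivSubmodule k L M) with hb | hb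
  · exact p.ne_zero (by simpa [hb] using hm)
  · exact hxw ((hb ▸ LieSubmodule.mem_top w : w ∈ maxTrivSubmodule k L M) x)

namespace HasPrimitiveVectorWith

variable {t : IsSl2Triple h e f} {μ : k} {m : M} (p : HasPrimitiveVectorWith t m μ)
include p

lemma lie_e_lie_f : ⁅e, ⁅f, m⁆⁆ = μ • m := by
  simpa using p.lie_e_pow_succ_toEnd_f 0

omit [CharZero k] in
lemma lie_h_lie_f : ⁅h, ⁅f, m⁆⁆ = (μ - 2) • ⁅f, m⁆ := by
  simpa using p.lie_h_pow_toEnd_f 1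

lemma coeff_eq_zero_of_lie_eq_zero (hμ : μ ≠ 0) {a b c : k}
    (hx : ⁅a • e + b • h + c • f, m⁆ = 0) : b = 0 ∧ c = 0 := by
  have hx' : (b * μ) • m + c • ⁅f, m⁆ = 0 := by
    simpa [p.lie_e, p.lie_h, smul_smul] using hx
  have hc : c = 0 := by
    have := congrArg (⁅e, ·⁆) hx'
    simpa [p.lie_e, p.lie_e_lie_f, hμ, p.ne_zero] using this
  exact ⟨by simpa [hc, hμ, p.ne_zero] using hx', hc⟩

lemma coeff_eq_zero_of_lie_lie_f_eq_zero (hμ : μ ≠ 0) (hμ2 : μ ≠ 2) {a b c : k}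
    (hx : ⁅a • e + b • h + c • f, ⁅f, m⁆⁆ = 0) : a = 0 ∧ b = 0 := by
  have hx' : (a * μ) • m + (b * (μ - 2)) • ⁅f, m⁆ + c • ⁅f, ⁅f, m⁆⁆ = 0 := by
    simpa [p.lie_e_lie_f, p.lie_h_lie_f, smul_smul] using hx
  have hff : ⁅h, ⁅f, ⁅f, m⁆⁆⁆ = (μ - 4) • ⁅f, ⁅f, m⁆⁆ := by
    have := p.lie_h_pow_toEnd_f 2
    norm_num [pow_succ'] at this
    exact this
  have hf : ⁅f, m⁆ ≠ 0 := fun hf ↦ by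
    simpa [hf, hμ, p.ne_zero] using p.lie_e_lie_f.symm
  have h1 : (4 * (a * μ)) • m + (2 * (b * (μ - 2))) • ⁅f, m⁆ = 0 := by
    have := congrArg (fun y ↦ ⁅h, y⁆ - (μ - 4) • y) hx'
    simp only [lie_add, lie_smul, p.lie_h, p.lie_h_lie_f, hff, lie_zero, smul_zero,
      sub_zero] at this
    rw [← this]
    module
  have h2 : (8 * (a * μ)) • m = 0 := by
    have := congrArg (fun y ↦ ⁅h, y⁆ - (μ - 2) • y) h1
    simp only [lie_add, lie_smul, p.lie_h, p.lie_h_lie_f, lie_zero, smul_zero,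
      sub_zero] at this
    rw [← this]
    module
  have ha : a = 0 := by simpa [hμ, p.ne_zero] using h2
  exact ⟨ha, by simpa [ha, hf, sub_ne_zero.2 hμ2] using h1⟩

end HasPrimitiveVectorWith

end

variable {k L V : Type*} [Field k] [CharZero k] [LieRing L] [LieAlgebra k L]
  [AddCommGroup V] [Module k V] [LieRingModule L V] [LieModule k L V] {h e f : L}

lemma eq_zero_of_apply_submodule_eq_zero [FiniteDimensional k V]
    (t : IsSl2Triple h e f) (ht : ∀ x : L, ∃ a b c : k, x = a • e + b • h + c • f)
    (W : LieSubmodule k L V) (hWnontriv : ∃ x : L, ∃ w ∈ W, ⁅x, w⁆ ≠ 0)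
    (hWirr : IsIrreducible k L W) (hdim : finrank k W ≠ 3)
    (P : V →ₗ[k] V →ₗ[k] L) (hPsymm : ∀ u v : V, P u v = P v u)
    (h1 : ∀ u v w : V, ⁅P u v, w⁆ + ⁅P v w, u⁆ + ⁅P w u, v⁆ = 0)
    (h2 : ∀ (x : L) (u v : V), ⁅x, P u v⁆ = P ⁅x, u⁆ v + P u ⁅x, v⁆)
    (hPWW : ∀ w ∈ W, ∀ w' ∈ W, P w w' = 0) (u v : V) : P u v = 0 := by
  have : Nontrivial W := (LieSubmodule.nontrivial_iff k L W).1 inferInstance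
  obtain ⟨n, ⟨m, hmW⟩, p'⟩ := exists_nat_hasPrimitiveVectorWith k W t
  have hn0 : (n : k) ≠ 0 := by
    obtain ⟨x, w, hw, hxw⟩ := hWnontriv
    exact_mod_cast p'.weight_ne_zero ht ⟨x, ⟨w, hw⟩, fun H ↦ hxw (congrArg Subtype.val H)⟩
  have hn2 : (n : k) ≠ 2 := by
    have := p'.finrank_eq ht
    have : n ≠ 2 := by lia
    exact_mod_cast this
  have p : HasPrimitiveVectorWith t m (n : k) :=
    ⟨fun H ↦ p'.ne_zero (by simpa using H), congrArg Subtype.val p'.lie_h,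
      congrArg Subtype.val p'.lie_e⟩
  have hfW : ⁅f, m⁆ ∈ W := W.lie_mem hmW
  have swap (v : V) {w w' : V} (hw : w ∈ W) (hw' : w' ∈ W) :
      ⁅P v w, w'⁆ + ⁅P v w', w⁆ = 0 := by
    have := h1 w w' v
    rwa [hPWW w hw w' hw', zero_lie, zero_add, hPsymm w' v, add_comm] at this
  have self (v : V) {w : V} (hw : w ∈ W) : ⁅P v w, w⁆ = 0 := by
    have := swap v hw hw
    rwa [← two_smul k, smul_eq_zero_iff_right two_ne_zero] at this
  have hPm (v : V) : P v m = 0 := by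
    obtain ⟨a, b, c, hx⟩ := ht (P v m)
    obtain ⟨a', b', c', hx'⟩ := ht (P v ⁅f, m⁆)
    have hs := self v hmW
    have hs' := self v hfW
    have hsw := swap v hmW hfW
    rw [hx] at hs
    rw [hx'] at hs'
    obtain ⟨rfl, rfl⟩ := p.coeff_eq_zero_of_lie_eq_zero hn0 hs
    obtain ⟨rfl, rfl⟩ := p.coeff_eq_zero_of_lie_lie_f_eq_zero hn0 hn2 hs'
    simp only [zero_smul, add_zero, zero_add] at hx hx'
    rw [hx, hx', smul_lie, smul_lie, p.lie_e_lie_f] at hsw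
    have ha : a = 0 := by
      have := congrArg (⁅h, ·⁆) hsw
      have h3 : (2 * (a * n) : k) • m = 0 := by
        simp only [lie_add, lie_smul, p.lie_h, p.lie_h_lie_f, lie_zero] at this
        calc (2 * (a * n) : k) • m = a • (n : k) • (n : k) • m + c' • (n - 2 : k) • ⁅f, m⁆
              - (n - 2 : k) • (a • (n : k) • m + c' • ⁅f, m⁆) := by module
          _ = 0 := by rw [this, hsw, smul_zero, sub_zero]
      simpa [hn0, p.ne_zero] using h3
    rw [hx, ha, zero_smul]
  have hPfm (v : V) : P v ⁅f, m⁆ = 0 := by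
    have := h2 f v m
    rwa [hPm, hPm, lie_zero, zero_add, eq_comm] at this
  have hm := h1 u v m
  have hfm := h1 u v ⁅f, m⁆
  rw [hPm, hPsymm m, hPm, zero_lie, zero_lie, add_zero, add_zero] at hm
  rw [hPfm, hPsymm ⁅f, m⁆, hPfm, zero_lie, zero_lie, add_zero, add_zero] at hfm
  obtain ⟨a, b, c, hx⟩ := ht (P u v)
  rw [hx] at hm hfm ⊢
  obtain ⟨rfl, rfl⟩ := p.coeff_eq_zero_of_lie_eq_zero hn0 hm
  obtain ⟨rfl, -⟩ := p.coeff_eq_zero_of_lie_lie_f_eq_zero hn0 hn2 hfm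
  simp

end IsSl2Triple

namespace LieAlgebra.SpecialLinear

variable (k : Type*) [Field k]

lemma isSl2Triple_single [CharZero k] :
    IsSl2Triple (singleSubSingle 0 1 (1 : k)) (single 0 1 (by decide) (1 : k))
      (single (1 : Fin 2) 0 (by decide) (1 : k)) where
  h_ne_zero H := by
    simpa [Matrix.single] using congrFun (congrFun (congrArg Subtype.val H) 0) 0
  lie_e_f := by
    ext i j
    rw [sl_bracket]
    fin_cases i <;> fin_cases j <;> simp [Matrix.single, Matrix.mul_apply]
  lie_h_e_nsmul := by
    ext i j
    rw [sl_bracket]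
    fin_cases i <;> fin_cases j <;> norm_num [Matrix.single, Matrix.mul_apply]
  lie_h_f_nsmul := by
    ext i j
    rw [sl_bracket]
    fin_cases i <;> fin_cases j <;> norm_num [Matrix.single, Matrix.mul_apply]

variable {k} in
lemma exists_eq_smul_single (x : sl (Fin 2) k) :
    ∃ a b c : k, x = a • single 0 1 (by decide) (1 : k) + b • singleSubSingle 0 1 (1 : k) +
      c • single (1 : Fin 2) 0 (by decide) (1 : k) := by
  have htr : x.1 0 0 + x.1 1 1 = 0 := by
    rw [← Matrix.trace_fin_two]
    exact LinearMap.mem_ker.1 x.2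
  refine ⟨x.1 0 1, x.1 0 0, x.1 1 0, ?_⟩
  ext i j
  fin_cases i <;> fin_cases j <;>
    simp [Matrix.single, eq_neg_of_add_eq_zero_right htr]

end LieAlgebra.SpecialLinear

/-- Over a field of characteristic zero, let `V` be a finite-dimensional
representation of `sl(2,k)` and `W ⊆ V` a non-trivial irreducible submodule with
`dim W ≠ 3`. If `P : V × V → sl(2,k)` is symmetric bilinear, satisfies relations (1) and
(2), and `P(W,W) = 0`, then `P ≡ 0`. -/
theorem stmt_11 (k V : Type*) [Field k] [CharZero k]
    [AddCommGroup V] [Module k V] [LieRingModule (sl2 k) V] [LieModule k (sl2 k) V]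
    [FiniteDimensional k V]
    (W : LieSubmodule k (sl2 k) V)
    (hWnontriv : ∃ x : sl2 k, ∃ w ∈ W, ⁅x, w⁆ ≠ 0)
    (hWirr : LieModule.IsIrreducible k (sl2 k) ↥W)
    (hdim : Module.finrank k ↥W ≠ 3)
    (P : V →ₗ[k] V →ₗ[k] sl2 k) (hPsymm : ∀ u v : V, P u v = P v u)
    (h1 : ∀ u v w : V, ⁅P u v, w⁆ + ⁅P v w, u⁆ + ⁅P w u, v⁆ = 0)
    (h2 : ∀ (x : sl2 k) (u v : V), ⁅x, P u v⁆ = P ⁅x, u⁆ v + P u ⁅x, v⁆)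
    (hPWW : ∀ w ∈ W, ∀ w' ∈ W, P w w' = 0) :
    ∀ u v : V, P u v = 0 := by
  exact LieAlgebra.SpecialLinear.isSl2Triple_single k |>.eq_zero_of_apply_submodule_eq_zero
    LieAlgebra.SpecialLinear.exists_eq_smul_single W hWnontriv hWirr hdim P hPsymm h1 h2 hPWW
end
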